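/- Let S be a finite set of points in the plane that is in convex position and in general position. Then for every directed edge a→b of Θ₆(S) there is a path between a and b in ΘΘ₆(S) of length at most 4·|ab|. -/

import Mathlib

/-!
In the oblique coordinates `x`, `y` along the two boundary rays of a cone of `a`, the cone is the
quadrant `x, y > 0`, the projective distance is `√3 / 2 · (x + y)` and `|ab|² = x² + xy + y²`.

If an edge `a → b` of `Θ₆` is missing from `ΘΘ₆`, then `ΘΘ₆` contains an edge `c → b` whose source
`c` has `height a < height c`, where `height = x + y`. The triangle of `a → b` being empty, `c` lies
in one of the two cones of `a` adjacent to that of `b`, say the one reached by turning from the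
`y`-axis towards the `x`-axis. By convexity, the points of `S` in this cone up to `c` form a chain
along which both `x` and `height` increase, and consecutive points of the chain are joined in
`ΘΘ₆`. So `a` reaches `b` through the `Θ₆`-neighbour `d` of `a` in the next cone, the chain from
`d` to `c`, and the edge `c → b`.

The edge `a → d` may itself be blocked, but only in the same direction of rotation, and a bound
`k x + y` for it in the turned coordinates gives the bound `(k + 1) x + y` for `a → b`, starting
from `|ad| ≤ x + y` for an edge of `ΘΘ₆`. Four blocked edges in a row are impossible: `a` would lie
in a triangle with vertices in three alternate cones of `a`. Hence there is a path of length at most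
`4 x + y ≤ 4 √(x² + xy + y²)`.
-/

open Real

noncomputable section

/-- Counterclockwise angle in `[0, 2π)` from the positive x-axis to the direction of `z`. -/
def argIn (z : ℂ) : ℝ := if 0 ≤ Complex.arg z then Complex.arg z else Complex.arg z + 2 * π

/-- The half-open cone `C_i(u)` with apex `u`: points `p ≠ u` whose direction from `u` has
counterclockwise angle in `[(i-1)π/3, iπ/3)`. -/
def cone (i : ℕ) (u : ℂ) : Set ℂ :=
  {p | p ≠ u ∧ argIn (p - u) ∈ Set.Ico (((i : ℝ) - 1) * (π / 3)) ((i : ℝ) * (π / 3))}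

/-- The index `i ∈ {1, …, 6}` of the cone of `u` containing `v`. -/
def coneIdx (u v : ℂ) : ℕ := (⌊argIn (v - u) / (π / 3)⌋).toNat + 1

/-- The angle of the bisector ray of the cone of `u` containing `v`. -/
def bisAngle (u v : ℂ) : ℝ := ((coneIdx u v : ℝ) - 1) * (π / 3) + π / 6

/-- The projective distance from `u` to `v`: the Euclidean distance from `u` to the
orthogonal projection of `v` onto the bisector ray of the cone of `u` containing `v`. -/
def projDist (u v : ℂ) : ℝ :=
  ((v - u) * Complex.exp (-(Complex.I * (bisAngle u v : ℂ)))).re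

/-- `S` is in general position: no two points of `S` lie on a common line parallel to one of
the six rays from the origin at angles `jπ/3`. -/
def GenPos (S : Finset ℂ) : Prop :=
  ∀ u ∈ S, ∀ v ∈ S, u ≠ v → ∀ j : ℕ, argIn (v - u) ≠ (j : ℝ) * (π / 3)

/-- `S` is in convex position: every point of `S` is an extreme point of the convex hull. -/
def ConvexPos (S : Finset ℂ) : Prop :=
  ∀ p ∈ S, p ∈ Set.extremePoints ℝ (convexHull ℝ (S : Set ℂ))

/-- `u → v` is a directed edge of `Θ₆(S)`: `v` minimizes the projective distance from `u`
among the points of `S` in the cone of `u` containing `v`. -/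
def ThetaEdge (S : Finset ℂ) (u v : ℂ) : Prop :=
  u ∈ S ∧ v ∈ S ∧ v ≠ u ∧
    ∀ w ∈ S, w ∈ cone (coneIdx u v) u → projDist u v ≤ projDist u w

/-- `u → v` is a directed edge of `ΘΘ₆(S)`: it is an edge of `Θ₆(S)` and among all incoming
`Θ₆`-edges `w → v` with `w` in the same cone of `v` as `u`, it minimizes `‖wv‖`. -/
def ThetaThetaEdge (S : Finset ℂ) (u v : ℂ) : Prop :=
  ThetaEdge S u v ∧
    ∀ w, ThetaEdge S w v → coneIdx v w = coneIdx v u → projDist u v ≤ projDist w v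

/-- Undirected adjacency in `ΘΘ₆(S)`: paths may use edges in either direction. -/
def TTAdj (S : Finset ℂ) (u v : ℂ) : Prop := ThetaThetaEdge S u v ∨ ThetaThetaEdge S v u

/-- `p` is a path between `u` and `v` with respect to the adjacency relation `A`. -/
def IsPath (A : ℂ → ℂ → Prop) (u v : ℂ) (p : List ℂ) : Prop :=
  p.Chain' A ∧ p.head? = some u ∧ p.getLast? = some v

/-- The Euclidean length of the polygonal path through the points of `p`. -/
def pathLength (p : List ℂ) : ℝ := (List.zipWith dist p p.tail).sum

/-! ### Convex combinations -/

lemma mem_of_convex_of_smul_sub_add_eq_zero {E : Type*} [AddCommGroup E] [Module ℝ E] {s : Set E}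
    (hs : Convex ℝ s) {p a b c : E} (ha : a ∈ s) (hb : b ∈ s) (hc : c ∈ s) {α β γ : ℝ}
    (hα : 0 ≤ α) (hβ : 0 ≤ β) (hγ : 0 ≤ γ) (hpos : 0 < α + β + γ)
    (h : α • (a - p) + β • (b - p) + γ • (c - p) = 0) : p ∈ s := by
  have hsum : α • a + β • b + γ • c = (α + β + γ) • p := by
    rw [← sub_eq_zero, ← h]
    module
  have hp : p = ∑ i, (![α, β, γ] i / (α + β + γ)) • ![a, b, c] i := by
    simp only [Fin.sum_univ_three, Matrix.cons_val, div_eq_inv_mul, mul_smul, ← smul_add, hsum]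
    rw [inv_smul_smul₀ hpos.ne']
  rw [hp]
  refine hs.sum_mem (fun i _ => div_nonneg ?_ hpos.le) ?_ fun i _ => ?_
  · fin_cases i <;> assumption
  · rw [← Finset.sum_div, Fin.sum_univ_three]
    exact div_self hpos.ne'
  · fin_cases i <;> assumption

/-! ### Paths of bounded length -/

/-- `u` and `v` are joined by an `A`-path of length at most `B`. -/
def HasPathLE (A : ℂ → ℂ → Prop) (u v : ℂ) (B : ℝ) : Prop :=
  ∃ p : List ℂ, IsPath A u v p ∧ pathLength p ≤ B

lemma pathLength_cons_cons (u v : ℂ) (p : List ℂ) :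
    pathLength (u :: v :: p) = dist u v + pathLength (v :: p) := rfl

namespace HasPathLE

variable {A : ℂ → ℂ → Prop} {u v w : ℂ} {B C : ℝ}

lemma mono (h : HasPathLE A u v B) (hBC : B ≤ C) : HasPathLE A u v C :=
  h.imp fun _ hp => ⟨hp.1, hp.2.trans hBC⟩

lemma refl (u : ℂ) : HasPathLE A u u 0 :=
  ⟨[u], ⟨List.isChain_singleton _, rfl, rfl⟩, le_rfl⟩

lemma cons (huv : A u v) (hvw : HasPathLE A v w C) : HasPathLE A u w (dist u v + C) := by
  obtain ⟨_ | ⟨x, p⟩, ⟨hchain, hhead, hlast⟩, hlen⟩ := hvw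
  · simp at hhead
  obtain rfl : x = v := by simpa using hhead
  refine ⟨u :: x :: p, ⟨List.isChain_cons_cons.2 ⟨huv, hchain⟩, rfl, by simpa using hlast⟩, ?_⟩
  rw [pathLength_cons_cons]
  gcongr

lemma single (huv : A u v) : HasPathLE A u v (dist u v) := by
  simpa using cons huv (refl v)

lemma trans (huv : HasPathLE A u v B) (hvw : HasPathLE A v w C) : HasPathLE A u w (B + C) := by
  obtain ⟨p, ⟨hchain, hhead, hlast⟩, hlen⟩ := huv
  refine mono ?_ (add_le_add_left hlen C)
  clear hlen
  induction p generalizing u with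
  | nil => simp at hhead
  | cons x p ih =>
    obtain rfl : x = u := by simpa using hhead
    rcases p with _ | ⟨y, p⟩
    · obtain rfl : x = v := by simpa using hlast
      simpa [pathLength] using hvw
    · obtain ⟨hxy, hchain⟩ := List.isChain_cons_cons.1 hchain
      rw [pathLength_cons_cons, add_assoc]
      exact cons hxy (ih hchain rfl (by simpa using hlast))

end HasPathLE

/-! ### Angles and sectors -/

lemma argIn_nonneg (z : ℂ) : 0 ≤ argIn z := by
  unfold argIn
  split_ifs with h
  · exact h
  · linarith [Complex.neg_pi_lt_arg z, pi_pos]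

lemma argIn_lt_two_pi (z : ℂ) : argIn z < 2 * π := by
  unfold argIn
  split_ifs
  · linarith [Complex.arg_le_pi z, pi_pos]
  · linarith

lemma norm_mul_cos_argIn (z : ℂ) : ‖z‖ * cos (argIn z) = z.re := by
  unfold argIn
  split_ifs <;> simp [Complex.norm_mul_cos_arg]

lemma norm_mul_sin_argIn (z : ℂ) : ‖z‖ * sin (argIn z) = z.im := by
  unfold argIn
  split_ifs <;> simp [Complex.norm_mul_sin_arg]

/-- The number `i - 1 ∈ {0, …, 5}` of the cone `C_i` of the origin containing `z`, as an integer so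
that it can be compared modulo `6`. -/
def sector (z : ℂ) : ℤ := ⌊argIn z / (π / 3)⌋

lemma sector_nonneg (z : ℂ) : 0 ≤ sector z :=
  Int.floor_nonneg.2 (div_nonneg (argIn_nonneg z) (by positivity))

lemma sector_lt_six (z : ℂ) : sector z < 6 := by
  rw [sector, Int.floor_lt, div_lt_iff₀ (by positivity)]
  push_cast
  linarith [argIn_lt_two_pi z]

lemma sector_eq_iff {z : ℂ} {k : ℤ} :
    sector z = k ↔ argIn z ∈ Set.Ico (k * (π / 3)) ((k + 1) * (π / 3)) := by
  rw [sector, Int.floor_eq_iff, le_div_iff₀ (by positivity), div_lt_iff₀ (by positivity),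
    Set.mem_Ico]

lemma coneIdx_cast_sub_one (u v : ℂ) : (coneIdx u v : ℝ) - 1 = sector (v - u) := by
  have h : ((sector (v - u)).toNat : ℤ) = sector (v - u) := Int.toNat_of_nonneg (sector_nonneg _)
  have hcone : coneIdx u v = (sector (v - u)).toNat + 1 := rfl
  rw [hcone, Nat.cast_add_one, add_sub_cancel_right]
  exact_mod_cast h

lemma coneIdx_eq_coneIdx_iff {u v w : ℂ} :
    coneIdx u w = coneIdx u v ↔ sector (w - u) = sector (v - u) := by
  rw [← @Int.cast_inj ℝ, ← coneIdx_cast_sub_one, ← coneIdx_cast_sub_one, sub_left_inj,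
    Nat.cast_inj]

lemma mem_cone_coneIdx_iff {u v w : ℂ} :
    w ∈ cone (coneIdx u v) u ↔ w ≠ u ∧ coneIdx u w = coneIdx u v := by
  rw [coneIdx_eq_coneIdx_iff, sector_eq_iff, ← coneIdx_cast_sub_one, sub_add_cancel]
  rfl

lemma projDist_eq_norm_mul_cos (u v : ℂ) :
    projDist u v = ‖v - u‖ * cos (argIn (v - u) - (sector (v - u) * (π / 3) + π / 6)) := by
  have hexp (t : ℝ) : Complex.exp (-(Complex.I * t)) = ⟨cos t, -sin t⟩ := by
    rw [show -(Complex.I * t) = ((-t : ℝ) : ℂ) * Complex.I by push_cast; ring]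
    exact Complex.ext (by rw [Complex.exp_ofReal_mul_I_re, cos_neg])
      (by rw [Complex.exp_ofReal_mul_I_im, sin_neg])
  rw [projDist, bisAngle, coneIdx_cast_sub_one, hexp, Complex.mul_re, ← norm_mul_cos_argIn,
    ← norm_mul_sin_argIn, cos_sub]
  ring

/-- No boundary ray of a cone of the origin passes through `z`. -/
def OffRays (z : ℂ) : Prop := ∀ j : ℕ, argIn z ≠ j * (π / 3)

lemma OffRays.argIn_ne {z : ℂ} (hz : OffRays z) (k : ℤ) : argIn z ≠ k * (π / 3) := by
  intro h
  obtain ⟨j, rfl⟩ : ∃ j : ℕ, (j : ℤ) = k := CanLift.prf k <| by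
    have := argIn_nonneg z
    rw [h, mul_nonneg_iff_of_pos_right (by positivity)] at this
    exact_mod_cast this
  exact hz j (by exact_mod_cast h)

lemma GenPos.offRays {S : Finset ℂ} (hgen : GenPos S) {u v : ℂ} (hu : u ∈ S) (hv : v ∈ S)
    (hne : v ≠ u) : OffRays (v - u) :=
  hgen u hu v hv hne.symm

/-! ### Coordinates along the cone boundaries -/

/-- Up to the factor `2 / √3`, the signed distance of `z` from the ray at angle `kπ/3`, positive on
its counterclockwise side. With this factor, `-rayCoord (k + 1)` and `rayCoord k` are the
coordinates with respect to the unit vectors at angles `kπ/3` and `(k + 1)π/3`. -/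
def rayCoord (k : ℤ) : ℂ →ₗ[ℝ] ℝ :=
  (2 / √3) • (cos (k * (π / 3)) • Complex.imLm - sin (k * (π / 3)) • Complex.reLm)

lemma rayCoord_apply (k : ℤ) (z : ℂ) :
    rayCoord k z = 2 / √3 * (‖z‖ * sin (argIn z - k * (π / 3))) := by
  simp only [rayCoord, LinearMap.smul_apply, LinearMap.sub_apply, Complex.imLm_coe,
    Complex.reLm_coe, smul_eq_mul]
  rw [← norm_mul_cos_argIn, ← norm_mul_sin_argIn, sin_sub]
  ring

lemma rayCoord_succ_apply (k : ℤ) (z : ℂ) :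
    rayCoord (k + 1) z = -(2 / √3 * (‖z‖ * sin (π / 3 - (argIn z - k * (π / 3))))) := by
  rw [rayCoord_apply, ← mul_neg, ← mul_neg, ← sin_neg]
  push_cast
  ring_nf

lemma rayCoord_sub_rayCoord_succ (k : ℤ) :
    rayCoord k - rayCoord (k + 1) = rayCoord (k - 1) := by
  ext z
  simp only [LinearMap.sub_apply, rayCoord_apply, Int.cast_add, Int.cast_sub, Int.cast_one]
  rw [show argIn z - (k + 1) * (π / 3) = argIn z - k * (π / 3) - π / 3 by ring,
    show argIn z - (k - 1) * (π / 3) = argIn z - k * (π / 3) + π / 3 by ring, sin_sub _ (π / 3),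
    sin_add _ (π / 3), cos_pi_div_three]
  ring

lemma norm_sq_eq_rayCoord (k : ℤ) (z : ℂ) : ‖z‖ ^ 2 =
    rayCoord (k + 1) z ^ 2 - rayCoord (k + 1) z * rayCoord k z + rayCoord k z ^ 2 := by
  have h3 : √3 ^ 2 = 3 := sq_sqrt (by norm_num)
  rw [rayCoord_succ_apply, rayCoord_apply, sin_sub (π / 3), cos_pi_div_three, sin_pi_div_three]
  generalize argIn z - k * (π / 3) = t
  have hsc := sin_sq_add_cos_sq t
  field_simp
  rw [h3]
  linear_combination (-3 * ‖z‖ ^ 2) * hsc - (‖z‖ ^ 2 * cos t ^ 2) * h3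

lemma OffRays.rayCoord_ne_zero {z : ℂ} (hz : OffRays z) (k : ℤ) : rayCoord k z ≠ 0 := by
  have hnorm : ‖z‖ ≠ 0 := by
    rw [norm_ne_zero_iff]
    rintro rfl
    simpa [argIn] using hz 0
  rw [rayCoord_apply]
  refine mul_ne_zero (by positivity) (mul_ne_zero hnorm fun hsin => ?_)
  obtain ⟨n, hn⟩ := sin_eq_zero_iff.1 hsin
  refine hz.argIn_ne (k + 3 * n) ?_
  push_cast
  linarith

lemma sin_pos_and_sin_pi_div_three_sub_pos_iff {t : ℝ} :
    (0 < sin t ∧ 0 < sin (π / 3 - t)) ↔ ∃ n : ℤ, t - n * (2 * π) ∈ Set.Ioo 0 (π / 3) := by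
  have hπ := pi_pos
  constructor
  · rintro ⟨hsin, hsin'⟩
    obtain ⟨n, ⟨hlo, hhi⟩, -⟩ := existsUnique_sub_zsmul_mem_Ioc two_pi_pos t (-π)
    rw [zsmul_eq_mul] at hlo hhi
    refine ⟨n, ?_⟩
    rw [← sin_sub_int_mul_two_pi t n] at hsin
    rw [← sin_add_int_mul_two_pi _ n, sub_add] at hsin'
    set s := t - n * (2 * π)
    have hs : 0 < s := by
      by_contra! hs
      exact hsin.not_ge (sin_nonpos_of_nonpos_of_neg_pi_le hs hlo.le)
    refine ⟨hs, ?_⟩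
    by_contra! hs'
    exact hsin'.not_ge (sin_nonpos_of_nonpos_of_neg_pi_le (by linarith) (by linarith))
  · rintro ⟨n, hlo, hhi⟩
    rw [← sin_sub_int_mul_two_pi t n, ← sin_add_int_mul_two_pi (π / 3 - t) n, sub_add]
    exact ⟨sin_pos_of_pos_of_lt_pi hlo (by linarith),
      sin_pos_of_pos_of_lt_pi (by linarith) (by linarith)⟩

lemma rayCoord_pos_and_succ_neg_iff {z : ℂ} {k : ℤ} :
    (0 < rayCoord k z ∧ rayCoord (k + 1) z < 0) ↔
      z ≠ 0 ∧ ∃ n : ℤ, argIn z ∈ Set.Ioo ((k + 6 * n : ℤ) * (π / 3)) ((k + 6 * n + 1 : ℤ) * (π / 3))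
      := by
  rcases eq_or_ne z 0 with rfl | hz
  · simp
  have hscale : 0 < 2 / √3 * ‖z‖ := by positivity
  rw [rayCoord_apply, rayCoord_succ_apply, neg_neg_iff_pos, ← mul_assoc, ← mul_assoc,
    mul_pos_iff_of_pos_left hscale, mul_pos_iff_of_pos_left hscale,
    sin_pos_and_sin_pi_div_three_sub_pos_iff, and_iff_right hz]
  refine exists_congr fun n => ?_
  push_cast
  rw [Set.mem_Ioo, Set.mem_Ioo]
  constructor <;> rintro ⟨hlo, hhi⟩ <;> constructor <;> linarith

lemma sector_modEq_of_rayCoord {z : ℂ} {k : ℤ} (h : 0 < rayCoord k z)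
    (h' : rayCoord (k + 1) z < 0) : sector z ≡ k [ZMOD 6] := by
  obtain ⟨-, n, hlo, hhi⟩ := rayCoord_pos_and_succ_neg_iff.1 ⟨h, h'⟩
  have : sector z = k + 6 * n := sector_eq_iff.2 ⟨hlo.le, by exact_mod_cast hhi⟩
  simp [this, Int.modEq_iff_dvd]

lemma OffRays.sector_modEq_iff {z : ℂ} (hz : OffRays z) (k : ℤ) :
    sector z ≡ k [ZMOD 6] ↔ 0 < rayCoord k z ∧ rayCoord (k + 1) z < 0 := by
  refine ⟨fun h => ?_, fun h => sector_modEq_of_rayCoord h.1 h.2⟩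
  obtain ⟨n, hn⟩ := h.symm.dvd
  obtain ⟨hlo, hhi⟩ := sector_eq_iff.1 (show sector z = k + 6 * n by linarith)
  refine rayCoord_pos_and_succ_neg_iff.2 ⟨?_, n, lt_of_le_of_ne hlo (hz.argIn_ne _).symm, ?_⟩
  · rintro rfl
    simpa [argIn] using hz 0
  · exact_mod_cast hhi

lemma projDist_eq_rayCoord {u v : ℂ} {k : ℤ} (h : 0 < rayCoord k (v - u))
    (h' : rayCoord (k + 1) (v - u) < 0) :
    projDist u v = √3 / 2 * (rayCoord k (v - u) - rayCoord (k + 1) (v - u)) := by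
  obtain ⟨n, hn⟩ := (sector_modEq_of_rayCoord h h').symm.dvd
  rw [projDist_eq_norm_mul_cos, show sector (v - u) = k + 6 * n by linarith, rayCoord_succ_apply,
    rayCoord_apply, ← cos_add_int_mul_two_pi _ n]
  push_cast
  rw [show argIn (v - u) - ((k + 6 * n) * (π / 3) + π / 6) + n * (2 * π) =
    argIn (v - u) - k * (π / 3) - π / 6 by ring]
  generalize argIn (v - u) - k * (π / 3) = t
  rw [cos_sub, sin_sub (π / 3), cos_pi_div_six, sin_pi_div_six, cos_pi_div_three, sin_pi_div_three]
  field_simp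
  ring

/-! ### Hexagonal frames -/

/-- Oblique coordinates with respect to the unit vectors along two consecutive cone boundaries,
taken in either order. -/
structure HexFrame where
  x : ℂ →ₗ[ℝ] ℝ
  y : ℂ →ₗ[ℝ] ℝ
  axes : ∃ k : ℤ, (x = -rayCoord (k + 1) ∧ y = rayCoord k) ∨
    (x = rayCoord k ∧ y = -rayCoord (k + 1))

namespace HexFrame

/-- The sum of the two coordinates: `2 / √3` times the component along the bisector of the axes. -/
def height (F : HexFrame) : ℂ →ₗ[ℝ] ℝ := F.x + F.y

/-- `v` lies in the open cone with apex `u` spanned by the two axes. -/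
def Sees (F : HexFrame) (u v : ℂ) : Prop := F.x u < F.x v ∧ F.y u < F.y v

/-- The frame turned by `π/3` from its second axis towards its first axis. -/
def turn (F : HexFrame) : HexFrame where
  x := -F.y
  y := F.height
  axes := by
    obtain ⟨k, ⟨hx, hy⟩ | ⟨hx, hy⟩⟩ := F.axes
    · refine ⟨k - 1, .inl ⟨by rw [hy, sub_add_cancel], ?_⟩⟩
      rw [height, hx, hy, ← rayCoord_sub_rayCoord_succ, sub_eq_neg_add]
    · refine ⟨k + 1, .inr ⟨by rw [hy, neg_neg], ?_⟩⟩
      have := rayCoord_sub_rayCoord_succ (k + 1)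
      rw [add_sub_cancel_right] at this
      rw [height, hx, hy, ← this]
      abel

/-- The frame with its two axes exchanged: its reflection in the bisector of the axes. -/
def swap (F : HexFrame) : HexFrame where
  x := F.y
  y := F.x
  axes := F.axes.imp fun _ h => h.symm.imp And.symm And.symm

/-- The frame turned by `π`. -/
def opp (F : HexFrame) : HexFrame := F.turn.turn.turn

variable (F : HexFrame)

lemma height_apply (z : ℂ) : F.height z = F.x z + F.y z := rfl

@[simp] lemma turn_x (z : ℂ) : F.turn.x z = -F.y z := rfl

@[simp] lemma turn_y (z : ℂ) : F.turn.y z = F.height z := rfl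

@[simp] lemma turn_height (z : ℂ) : F.turn.height z = F.x z := by
  rw [height_apply, turn_x, turn_y, height_apply]
  ring

@[simp] lemma swap_x (z : ℂ) : F.swap.x z = F.y z := rfl

@[simp] lemma swap_y (z : ℂ) : F.swap.y z = F.x z := rfl

@[simp] lemma swap_height (z : ℂ) : F.swap.height z = F.height z := add_comm _ _

@[simp] lemma opp_x (z : ℂ) : F.opp.x z = -F.x z := by simp [opp]

@[simp] lemma opp_y (z : ℂ) : F.opp.y z = -F.y z := by simp [opp]

variable {F}

lemma turn_sees_iff {u v : ℂ} : F.turn.Sees u v ↔ F.y v < F.y u ∧ F.height u < F.height v := by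
  simp [Sees]

lemma swap_sees_iff {u v : ℂ} : F.swap.Sees u v ↔ F.Sees u v := and_comm

lemma opp_sees_iff {u v : ℂ} : F.opp.Sees v u ↔ F.Sees u v := by simp [Sees]

namespace Sees

variable {u v w : ℂ}

lemma ne (h : F.Sees u v) : v ≠ u := by
  rintro rfl
  exact lt_irrefl _ h.1

lemma height_lt (h : F.Sees u v) : F.height u < F.height v := add_lt_add h.1 h.2

end Sees

lemma norm_sq (F : HexFrame) (z : ℂ) : ‖z‖ ^ 2 = F.x z ^ 2 + F.x z * F.y z + F.y z ^ 2 := by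
  obtain ⟨k, ⟨hx, hy⟩ | ⟨hx, hy⟩⟩ := F.axes <;>
  · rw [norm_sq_eq_rayCoord k, hx, hy, LinearMap.neg_apply]
    ring

lemma dist_sq (F : HexFrame) (u v : ℂ) : dist u v ^ 2 =
    (F.x v - F.x u) ^ 2 + (F.x v - F.x u) * (F.y v - F.y u) + (F.y v - F.y u) ^ 2 := by
  rw [dist_comm, dist_eq_norm, F.norm_sq, map_sub, map_sub]

lemma Sees.dist_le {u v : ℂ} (h : F.Sees u v) : dist u v ≤ F.height v - F.height u := by
  refine le_of_sq_le_sq ?_ (sub_nonneg.2 h.height_lt.le)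
  rw [F.dist_sq, height_apply, height_apply]
  nlinarith [mul_pos (sub_pos.2 h.1) (sub_pos.2 h.2)]

lemma ext_coords (F : HexFrame) {z w : ℂ} (hx : F.x z = F.x w) (hy : F.y z = F.y w) : z = w := by
  have h := F.dist_sq z w
  rw [hx, hy] at h
  simpa using h

/-! ### The two graphs in a frame -/

lemma Sees.projDist_eq {u v : ℂ} (h : F.Sees u v) :
    projDist u v = √3 / 2 * (F.height v - F.height u) := by
  obtain ⟨hx, hy⟩ := h
  rw [← sub_pos, ← map_sub] at hx hy
  rw [← map_sub, height_apply]
  obtain ⟨k, ⟨hkx, hky⟩ | ⟨hkx, hky⟩⟩ := F.axes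
  · rw [hkx, LinearMap.neg_apply, neg_pos] at hx
    rw [hky] at hy
    rw [projDist_eq_rayCoord hy hx, hkx, hky, LinearMap.neg_apply]
    ring
  · rw [hky, LinearMap.neg_apply, neg_pos] at hy
    rw [hkx] at hx
    rw [projDist_eq_rayCoord hx hy, hkx, hky, LinearMap.neg_apply]
    ring

lemma exists_sees_iff_sector_modEq (F : HexFrame) : ∃ k : ℤ, ∀ u v, OffRays (v - u) →
    (F.Sees u v ↔ sector (v - u) ≡ k [ZMOD 6]) := by
  obtain ⟨k, h⟩ := F.axes
  refine ⟨k, fun u v huv => ?_⟩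
  rw [huv.sector_modEq_iff, Sees, ← sub_pos, ← sub_pos (b := F.y u), ← map_sub, ← map_sub]
  obtain ⟨hx, hy⟩ | ⟨hx, hy⟩ := h
  · rw [hx, hy, LinearMap.neg_apply, neg_pos, and_comm]
  · rw [hx, hy, LinearMap.neg_apply, neg_pos]

lemma exists_sees {u v : ℂ} (h : OffRays (v - u)) : ∃ F : HexFrame, F.Sees u v := by
  obtain ⟨hk, hk'⟩ := (h.sector_modEq_iff _).1 rfl
  rw [map_sub] at hk hk'
  refine ⟨⟨_, _, sector (v - u), .inl ⟨rfl, rfl⟩⟩, ?_, by linarith⟩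
  simp only [LinearMap.neg_apply]
  linarith

section GeneralPosition

variable {S : Finset ℂ} {u v w : ℂ}

lemma y_ne (F : HexFrame) (hgen : GenPos S) (hu : u ∈ S) (hv : v ∈ S) (hne : v ≠ u) :
    F.y v ≠ F.y u := by
  rw [← sub_ne_zero, ← map_sub]
  have hray := (hgen.offRays hu hv hne).rayCoord_ne_zero
  obtain ⟨k, ⟨-, hy⟩ | ⟨-, hy⟩⟩ := F.axes
  · rw [hy]
    exact hray k
  · rw [hy, LinearMap.neg_apply, neg_ne_zero]
    exact hray (k + 1)

lemma x_ne (F : HexFrame) (hgen : GenPos S) (hu : u ∈ S) (hv : v ∈ S) (hne : v ≠ u) :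
    F.x v ≠ F.x u :=
  F.swap.y_ne hgen hu hv hne

lemma height_ne (F : HexFrame) (hgen : GenPos S) (hu : u ∈ S) (hv : v ∈ S) (hne : v ≠ u) :
    F.height v ≠ F.height u :=
  F.turn.y_ne hgen hu hv hne

lemma Sees.coneIdx_eq_iff (hgen : GenPos S) (hu : u ∈ S) (hv : v ∈ S) (hw : w ∈ S) (hwu : w ≠ u)
    (h : F.Sees u v) : coneIdx u w = coneIdx u v ↔ F.Sees u w := by
  obtain ⟨k, hk⟩ := F.exists_sees_iff_sector_modEq
  rw [hk u v (hgen.offRays hu hv h.ne)] at h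
  rw [coneIdx_eq_coneIdx_iff, hk u w (hgen.offRays hu hw hwu)]
  refine ⟨fun heq => heq ▸ h, fun hw => ?_⟩
  have hvw : sector (w - u) % 6 = sector (v - u) % 6 := hw.trans h.symm
  rwa [Int.emod_eq_of_lt (sector_nonneg _) (sector_lt_six _),
    Int.emod_eq_of_lt (sector_nonneg _) (sector_lt_six _)] at hvw

lemma Sees.mem_cone_iff (hgen : GenPos S) (hu : u ∈ S) (hv : v ∈ S) (hw : w ∈ S)
    (h : F.Sees u v) : w ∈ cone (coneIdx u v) u ↔ F.Sees u w := by
  rw [mem_cone_coneIdx_iff]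
  exact ⟨fun hw' => (h.coneIdx_eq_iff hgen hu hv hw hw'.1).1 hw'.2,
    fun hw' => ⟨hw'.ne, (h.coneIdx_eq_iff hgen hu hv hw hw'.ne).2 hw'⟩⟩

lemma Sees.thetaEdge_iff (hgen : GenPos S) (h : F.Sees u v) : ThetaEdge S u v ↔
    u ∈ S ∧ v ∈ S ∧ ∀ w ∈ S, F.Sees u w → F.height v ≤ F.height w := by
  refine and_congr_right fun hu => and_congr_right fun hv => ?_
  rw [and_iff_right h.ne]
  refine forall₂_congr fun w hw => ?_
  rw [h.mem_cone_iff hgen hu hv hw]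
  refine forall_congr' fun hw' => ?_
  rw [h.projDist_eq, hw'.projDist_eq, mul_le_mul_iff_right₀ (by positivity), sub_le_sub_iff_right]

lemma Sees.thetaThetaEdge_iff (hgen : GenPos S) (h : F.Sees u v) : ThetaThetaEdge S u v ↔
    ThetaEdge S u v ∧ ∀ w, ThetaEdge S w v → F.Sees w v → F.height w ≤ F.height u := by
  refine and_congr_right fun huv => forall₂_congr fun w hw => ?_
  rw [(opp_sees_iff.2 h).coneIdx_eq_iff hgen huv.2.1 huv.1 hw.1 hw.2.2.1.symm, opp_sees_iff]
  refine forall_congr' fun hw' => ?_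
  rw [h.projDist_eq, hw'.projDist_eq, mul_le_mul_iff_right₀ (by positivity), sub_le_sub_iff_left]

lemma exists_thetaEdge (hgen : GenPos S) (hu : u ∈ S) (hv : v ∈ S) (h : F.Sees u v) :
    ∃ w, ThetaEdge S u w ∧ F.Sees u w ∧ F.height w ≤ F.height v := by
  classical
  obtain ⟨w, hw, hmin⟩ := {w ∈ S | F.Sees u w}.exists_min_image F.height ⟨v, by simp [hv, h]⟩
  simp only [Finset.mem_filter, and_imp] at hw hmin
  exact ⟨w, (hw.2.thetaEdge_iff hgen).2 ⟨hu, hw.1, hmin⟩, hw.2, hmin v hv h⟩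

lemma exists_thetaThetaEdge (hgen : GenPos S) (huv : ThetaEdge S u v) (h : F.Sees u v) :
    ∃ w, ThetaThetaEdge S w v ∧ F.Sees w v ∧ F.height u ≤ F.height w := by
  classical
  obtain ⟨w, hw, hmax⟩ := {w ∈ S | ThetaEdge S w v ∧ F.Sees w v}.exists_max_image F.height
    ⟨u, by simp [huv.1, huv, h]⟩
  simp only [Finset.mem_filter, and_imp] at hw hmax
  exact ⟨w, (hw.2.2.thetaThetaEdge_iff hgen).2 ⟨hw.2.1, fun w' hw' => hmax w' hw'.1 hw'⟩, hw.2.2,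
    hmax u huv.1 huv h⟩

end GeneralPosition

/-! ### Convex position -/

/-- Twice the signed area of the triangle `p u v`, measured in frame coordinates. -/
def det (F : HexFrame) (p u v : ℂ) : ℝ :=
  (F.x u - F.x p) * (F.y v - F.y p) - (F.y u - F.y p) * (F.x v - F.x p)

variable {F : HexFrame} {S : Finset ℂ} {a b c d e p : ℂ}

lemma det_smul_sub_add_eq_zero (F : HexFrame) (p a b c : ℂ) :
    F.det p b c • (a - p) + F.det p c a • (b - p) + F.det p a b • (c - p) = 0 := by
  apply F.ext_coords <;>
  · simp only [map_add, map_smul, map_sub, map_zero, smul_eq_mul, det]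
    ring

lemma ne_of_det_pos (h : 0 < F.det p a b) : a ≠ p ∧ b ≠ p := by
  constructor <;>
  · rintro rfl
    simp [det] at h

lemma det_neg_of_convexPos (hconv : ConvexPos S) (hp : p ∈ S) (ha : a ∈ S) (hb : b ∈ S)
    (hc : c ∈ S) (hca : 0 < F.det p c a) (hab : 0 < F.det p a b) : F.det p b c < 0 := by
  by_contra! hbc
  have hmem {q : ℂ} (hq : q ∈ S) (hqp : q ≠ p) :
      q ∈ convexHull ℝ (convexHull ℝ (S : Set ℂ) \ {p}) :=
    subset_convexHull ℝ _ ⟨subset_convexHull ℝ _ hq, hqp⟩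
  have hp' := hconv p hp
  rw [(convex_convexHull ℝ _).mem_extremePoints_iff_mem_sdiff_convexHull_sdiff] at hp'
  exact hp'.2 <| mem_of_convex_of_smul_sub_add_eq_zero (convex_convexHull ℝ _)
    (hmem ha (ne_of_det_pos hab).1) (hmem hb (ne_of_det_pos hab).2) (hmem hc (ne_of_det_pos hca).1)
    hbc hca.le hab.le (by positivity) (F.det_smul_sub_add_eq_zero p a b c)

lemma not_sees_three_alternate_cones (hconv : ConvexPos S) (hp : p ∈ S) (ha : a ∈ S) (hb : b ∈ S)
    (hc : c ∈ S) (hpa : F.Sees p a) (hpb : F.turn.turn.Sees p b)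
    (hpc : F.turn.turn.turn.turn.Sees p c) : False := by
  obtain ⟨hax, hay⟩ := hpa
  obtain ⟨hbh, hbx⟩ := hpb
  obtain ⟨hcy, hch⟩ := hpc
  simp only [turn_x, turn_y, height_apply, neg_lt_neg_iff] at hbh hbx hcy hch
  have hba : 0 < F.det p b a := by rw [det]; nlinarith
  have hac : 0 < F.det p a c := by rw [det]; nlinarith
  have hcb : 0 < F.det p c b := by rw [det]; nlinarith
  exact (det_neg_of_convexPos hconv hp hb ha hc hcb hba).not_gt hac

/-! ### Blocked edges -/

/-- The edge `a → b` of `Θ₆` is discarded from `ΘΘ₆` in favour of `c → b`, and `c` lies in the cone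
of `a` following the one of `b` in the direction of `turn`. -/
structure Blocked (F : HexFrame) (S : Finset ℂ) (a b c : ℂ) : Prop where
  edge : ThetaEdge S a b
  sees : F.Sees a b
  survivor : ThetaThetaEdge S c b
  survivor_sees : F.Sees c b
  turn_sees : F.turn.Sees a c

lemma thetaThetaEdge_or_blocked (hgen : GenPos S) (hab : ThetaEdge S a b) (h : F.Sees a b) :
    ThetaThetaEdge S a b ∨ (∃ c, Blocked F S a b c) ∨ ∃ c, Blocked F.swap S a b c := by
  obtain ⟨c, hcb, hc, hle⟩ := exists_thetaThetaEdge hgen hab h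
  rcases eq_or_ne c a with rfl | hca
  · exact .inl hcb
  right
  have hcS : c ∈ S := hcb.1.1
  have hheight : F.height a < F.height c := hle.lt_of_ne (F.height_ne hgen hab.1 hcS hca).symm
  have hempty : ¬ F.Sees a c := fun hac =>
    (((h.thetaEdge_iff hgen).1 hab).2.2 c hcS hac).not_gt hc.height_lt
  rcases (F.y_ne hgen hab.1 hcS hca).lt_or_gt with hy | hy
  · exact .inl ⟨c, hab, h, hcb, hc, turn_sees_iff.2 ⟨hy, hheight⟩⟩
  · have hx : F.x c < F.x a :=
      (F.x_ne hgen hab.1 hcS hca).lt_or_gt.resolve_right fun hx => hempty ⟨hx, hy⟩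
    exact .inr ⟨c, hab, swap_sees_iff.2 h, hcb, swap_sees_iff.2 hc,
      turn_sees_iff.2 ⟨hx, by simpa using hheight⟩⟩

/-- `d` is a point of `S` in the cone of `a` that contains `c`, no farther than `c` in the
projective distance from `a`. For a blocked edge these points form a convex chain ending at `c`. -/
structure OnChain (F : HexFrame) (S : Finset ℂ) (a c d : ℂ) : Prop where
  mem : d ∈ S
  turn_sees : F.turn.Sees a d
  x_le : F.x d ≤ F.x c

lemma x_lt_of_turn_sees (h : F.turn.Sees a d) : F.x a < F.x d := by
  simpa using h.height_lt

lemma OnChain.x_lt (hd : F.OnChain S a c d) : F.x a < F.x d := x_lt_of_turn_sees hd.turn_sees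

lemma OnChain.y_lt (hd : F.OnChain S a c d) : F.y d < F.y a := (turn_sees_iff.1 hd.turn_sees).1

lemma OnChain.height_lt (hd : F.OnChain S a c d) : F.height a < F.height d :=
  (turn_sees_iff.1 hd.turn_sees).2

namespace Blocked

lemma onChain (B : Blocked F S a b c) : F.OnChain S a c c :=
  ⟨B.survivor.1.1, B.turn_sees, le_rfl⟩

lemma not_sees_of_height_lt (B : Blocked F S a b c) (hgen : GenPos S) (he : e ∈ S)
    (hlt : F.height e < F.height b) : ¬ F.Sees a e := fun hae =>
  (((B.sees.thetaEdge_iff hgen).1 B.edge).2.2 e he hae).not_gt hlt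

-- Otherwise `d` would lie in the triangle `a b e`.
lemma det_neg (B : Blocked F S a b c) (hconv : ConvexPos S) (hd : F.OnChain S a c d) (he : e ∈ S)
    (hx : F.x d < F.x e) (hy : F.y e < F.y d) : F.det d a e < 0 := by
  have hxb : F.x d < F.x b := hd.x_le.trans_lt B.survivor_sees.1
  have hyb : F.y d < F.y b := hd.y_lt.trans B.sees.2
  have hba : 0 < F.det d b a := by rw [det]; nlinarith [hd.x_lt, hd.y_lt]
  have heb : 0 < F.det d e b := by rw [det]; nlinarith
  exact det_neg_of_convexPos hconv hd.mem B.edge.2.1 B.edge.1 he heb hba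

lemma height_le_of_x_le (B : Blocked F S a b c) (hconv : ConvexPos S) (hgen : GenPos S)
    (hd : F.OnChain S a c d) (he : e ∈ S) (hx : F.x d ≤ F.x e) : F.height d ≤ F.height e := by
  rcases eq_or_ne e d with rfl | hne
  · exact le_rfl
  replace hx : F.x d < F.x e := hx.lt_of_ne (F.x_ne hgen hd.mem he hne).symm
  by_contra! hlt
  have hda := hd.height_lt
  simp only [height_apply] at hlt hda
  have hdet := B.det_neg hconv hd he hx (by linarith)
  rw [det] at hdet
  nlinarith [hd.y_lt]

lemma height_le_survivor (B : Blocked F S a b c) (hconv : ConvexPos S) (hgen : GenPos S)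
    (hd : F.OnChain S a c d) : F.height d ≤ F.height c :=
  B.height_le_of_x_le hconv hgen hd B.onChain.mem hd.x_le

lemma onChain_of_height_lt (B : Blocked F S a b c) (hconv : ConvexPos S) (hgen : GenPos S)
    (he : e ∈ S) (hx : F.x a < F.x e) (hlo : F.height a < F.height e)
    (hhi : F.height e < F.height c) : F.OnChain S a c e := by
  have hne : e ≠ a := by
    rintro rfl
    exact hx.false
  have hempty := B.not_sees_of_height_lt hgen he (hhi.trans B.survivor_sees.height_lt)
  have hy : F.y e < F.y a :=
    (F.y_ne hgen B.edge.1 he hne).lt_or_gt.resolve_right fun hy => hempty ⟨hx, hy⟩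
  refine ⟨he, turn_sees_iff.2 ⟨hy, hlo⟩, ?_⟩
  by_contra! hxc
  exact hhi.not_ge (B.height_le_of_x_le hconv hgen B.onChain he hxc.le)

end Blocked

/-! ### Following the chain -/

/-- The last point is the successor of `d` on the chain, ordered by the first coordinate. -/
structure ChainNext (F : HexFrame) (S : Finset ℂ) (a c d d' : ℂ) : Prop where
  left : F.OnChain S a c d
  right : F.OnChain S a c d'
  x_lt : F.x d < F.x d'
  x_le_of_lt : ∀ e, F.OnChain S a c e → F.x d < F.x e → F.x d' ≤ F.x e

namespace Blocked

variable {d' : ℂ}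

lemma exists_chainNext (B : Blocked F S a b c) (hgen : GenPos S) (hd : F.OnChain S a c d)
    (hdc : d ≠ c) : ∃ d', F.ChainNext S a c d d' := by
  classical
  have hc := B.onChain
  have hx : F.x d < F.x c := hd.x_le.lt_of_ne (F.x_ne hgen hc.mem hd.mem hdc)
  obtain ⟨d', hd', hmin⟩ := {e ∈ S | F.OnChain S a c e ∧ F.x d < F.x e}.exists_min_image F.x
    ⟨c, by simp [hc, hc.mem, hx]⟩
  simp only [Finset.mem_filter, and_imp] at hd' hmin
  exact ⟨d', hd, hd'.2.1, hd'.2.2, fun e he => hmin e he.mem he⟩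

lemma thetaThetaEdge_of_turn_sees (B : Blocked F S a b c) (hconv : ConvexPos S) (hgen : GenPos S)
    (hn : F.ChainNext S a c d d') (h : F.turn.Sees d d') : ThetaThetaEdge S d d' := by
  rw [h.thetaThetaEdge_iff hgen, h.thetaEdge_iff hgen]
  simp only [turn_height]
  refine ⟨⟨hn.left.mem, hn.right.mem, fun w hw hdw => ?_⟩, fun w hwd hw => ?_⟩
  · by_contra! hlt
    have hwc : F.OnChain S a c w :=
      ⟨hw, ⟨hn.left.turn_sees.1.trans hdw.1, hn.left.turn_sees.2.trans hdw.2⟩,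
        (hlt.trans_le hn.right.x_le).le⟩
    exact hlt.not_ge (hn.x_le_of_lt w hwc (x_lt_of_turn_sees hdw))
  · by_contra! hlt
    have hlo := B.height_le_of_x_le hconv hgen hn.left hwd.1 hlt.le
    have hhi := B.height_le_survivor hconv hgen hn.right
    have hwc : F.OnChain S a c w := B.onChain_of_height_lt hconv hgen hwd.1
      (hn.left.x_lt.trans hlt) (hn.left.height_lt.trans_le hlo)
      ((turn_sees_iff.1 hw).2.trans_le hhi)
    exact (x_lt_of_turn_sees hw).not_ge (hn.x_le_of_lt w hwc hlt)

lemma thetaThetaEdge_of_sees (B : Blocked F S a b c) (hconv : ConvexPos S) (hgen : GenPos S)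
    (hn : F.ChainNext S a c d d') (h : F.Sees d d') : ThetaThetaEdge S d d' := by
  have hhi := B.height_le_survivor hconv hgen hn.right
  rw [h.thetaThetaEdge_iff hgen, h.thetaEdge_iff hgen]
  refine ⟨⟨hn.left.mem, hn.right.mem, fun w hw hdw => ?_⟩, fun w hwd hw => ?_⟩
  · by_contra! hlt
    have hwc : F.OnChain S a c w := B.onChain_of_height_lt hconv hgen hw
      (hn.left.x_lt.trans hdw.1) (hn.left.height_lt.trans hdw.height_lt) (hlt.trans_le hhi)
    exact hlt.not_ge
      (B.height_le_of_x_le hconv hgen hn.right hw (hn.x_le_of_lt w hwc hdw.1))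
  · by_contra! hlt
    have hlo : F.height a < F.height w := hn.left.height_lt.trans hlt
    have hxw : F.x a < F.x w := by
      have hyw : F.y w < F.y a := hw.2.trans hn.right.y_lt
      simp only [height_apply] at hlo
      linarith
    have hwc : F.OnChain S a c w :=
      B.onChain_of_height_lt hconv hgen hwd.1 hxw hlo (hw.height_lt.trans_le hhi)
    have hxd : F.x w ≤ F.x d := not_lt.1 fun hdw => hw.1.not_ge (hn.x_le_of_lt w hwc hdw)
    exact hlt.not_ge (B.height_le_of_x_le hconv hgen hwc hn.left.mem hxd)

lemma exists_chain_step (B : Blocked F S a b c) (hconv : ConvexPos S) (hgen : GenPos S)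
    (hd : F.OnChain S a c d) (hdc : d ≠ c) : ∃ d', F.OnChain S a c d' ∧ F.x d < F.x d' ∧
      TTAdj S d d' ∧ dist d d' ≤ (F.x d' - F.x d) + (F.height d' - F.height d) := by
  obtain ⟨d', hn⟩ := B.exists_chainNext hgen hd hdc
  have hne : d' ≠ d := by
    rintro rfl
    exact hn.x_lt.false
  have hheight : F.height d < F.height d' :=
    (B.height_le_of_x_le hconv hgen hd hn.right.mem hn.x_lt.le).lt_of_ne
      (F.height_ne hgen hd.mem hn.right.mem hne).symm
  refine ⟨d', hn.right, hn.x_lt, ?_⟩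
  rcases (F.y_ne hgen hd.mem hn.right.mem hne).lt_or_gt with hy | hy
  · have hsees : F.turn.Sees d d' := turn_sees_iff.2 ⟨hy, hheight⟩
    refine ⟨.inl (B.thetaThetaEdge_of_turn_sees hconv hgen hn hsees), ?_⟩
    have hdist := hsees.dist_le
    simp only [turn_height] at hdist
    linarith
  · have hsees : F.Sees d d' := ⟨hn.x_lt, hy⟩
    refine ⟨.inl (B.thetaThetaEdge_of_sees hconv hgen hn hsees), ?_⟩
    linarith [hsees.dist_le, hn.x_lt]

lemma hasPathLE_chain (B : Blocked F S a b c) (hconv : ConvexPos S) (hgen : GenPos S)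
    (hd : F.OnChain S a c d) :
    HasPathLE (TTAdj S) d c ((F.x c - F.x d) + (F.height c - F.height d)) := by
  classical
  by_contra hbad
  set bad := {e ∈ S | F.OnChain S a c e ∧
    ¬ HasPathLE (TTAdj S) e c ((F.x c - F.x e) + (F.height c - F.height e))} with hbad_def
  obtain ⟨e, he, hmax⟩ := bad.exists_max_image F.x ⟨d, by simp [hbad_def, hd.mem, hd, hbad]⟩
  simp only [hbad_def, Finset.mem_filter, and_imp] at he hmax
  obtain ⟨-, he, hpath⟩ := he
  have hec : e ≠ c := by
    rintro rfl
    exact hpath (by simpa using HasPathLE.refl e)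
  obtain ⟨e', he', hlt, hadj, hdist⟩ := B.exists_chain_step hconv hgen he hec
  have hpath' := not_imp_comm.1 (hmax e' he'.mem he') hlt.not_ge
  exact hpath ((HasPathLE.cons hadj hpath').mono (by linarith))

end Blocked

/-! ### Turning around the source -/

/-- The bound `k Δx + Δy` on the length of a path replacing the edge `a → b`: the weight `k` drops
by one with every turn of the frame. -/
def detour (F : HexFrame) (k : ℝ) (a b : ℂ) : ℝ := k * (F.x b - F.x a) + (F.y b - F.y a)

lemma Sees.dist_le_detour {k : ℝ} (hk : 1 ≤ k) (h : F.Sees a b) : dist a b ≤ F.detour k a b := by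
  have hx : F.x b - F.x a ≤ k * (F.x b - F.x a) :=
    le_mul_of_one_le_left (sub_nonneg.2 h.1.le) hk
  have hdist := h.dist_le
  simp only [height_apply] at hdist
  unfold detour
  linarith

lemma Sees.detour_four_le (h : F.Sees a b) : F.detour 4 a b ≤ 4 * dist a b := by
  refine le_of_sq_le_sq ?_ (by positivity)
  rw [mul_pow, F.dist_sq, detour]
  nlinarith [mul_pos (sub_pos.2 h.1) (sub_pos.2 h.2), sq_nonneg (F.y b - F.y a)]

namespace Blocked

variable {d₂ c₂ d₃ c₃ : ℂ} {k : ℝ}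

lemma not_blocked_turn_swap (B : Blocked F S a b c) (hconv : ConvexPos S) (hgen : GenPos S)
    (hd : F.OnChain S a c d) : ¬ Blocked F.turn.swap S a d e := by
  intro B'
  obtain ⟨hy, hx⟩ := turn_sees_iff.1 B'.turn_sees
  simp only [swap_y, swap_height, turn_x, turn_height, neg_lt_neg_iff] at hx hy
  have hed : F.height e < F.height d := by simpa using B'.survivor_sees.1
  have hdb : F.height d < F.height b :=
    (B.height_le_survivor hconv hgen hd).trans_lt B.survivor_sees.height_lt
  exact B.not_sees_of_height_lt hgen B'.survivor.1.1 (hed.trans hdb) ⟨hx, hy⟩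

lemma hasPathLE_of_onChain (B : Blocked F S a b c) (hconv : ConvexPos S) (hgen : GenPos S)
    (hd : F.OnChain S a c d) (hk : 1 ≤ k) (had : HasPathLE (TTAdj S) a d (F.turn.detour k a d)) :
    HasPathLE (TTAdj S) a b (F.detour (k + 1) a b) := by
  have hcb : HasPathLE (TTAdj S) c b (F.height b - F.height c) :=
    (HasPathLE.single (.inl B.survivor)).mono B.survivor_sees.dist_le
  refine (had.trans ((B.hasPathLE_chain hconv hgen hd).trans hcb)).mono ?_
  have had' := hd.height_lt
  simp only [detour, turn_x, turn_y, height_apply] at had' ⊢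
  have hstart : k * (F.y a - F.y d) ≤ k * (F.x d - F.x a) := by
    gcongr ?_ * ?_
    linarith
  have hchain : F.x c - F.x d ≤ k * (F.x c - F.x d) :=
    le_mul_of_one_le_left (sub_nonneg.2 hd.x_le) hk
  have hend : k * (F.x c - F.x b) ≤ 0 :=
    mul_nonpos_of_nonneg_of_nonpos (by linarith) (sub_nonpos.2 B.survivor_sees.1.le)
  linarith

lemma hasPathLE_of_turn (B : Blocked F S a b c) (hconv : ConvexPos S) (hgen : GenPos S)
    (hk : 1 ≤ k) (hturn : ∀ d e, Blocked F.turn S a d e →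
      HasPathLE (TTAdj S) a d (F.turn.detour k a d)) :
    HasPathLE (TTAdj S) a b (F.detour (k + 1) a b) := by
  obtain ⟨d, hedge, hsees, hle⟩ := exists_thetaEdge hgen B.edge.1 B.survivor.1.1 B.turn_sees
  have hd : F.OnChain S a c d := ⟨hedge.2.1, hsees, by simpa using hle⟩
  refine B.hasPathLE_of_onChain hconv hgen hd hk ?_
  rcases thetaThetaEdge_or_blocked hgen hedge hsees with htt | ⟨e, hblocked⟩ | ⟨e, hblocked⟩
  · exact (HasPathLE.single (.inl htt)).mono (hsees.dist_le_detour hk)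
  · exact hturn d e hblocked
  · exact absurd hblocked (B.not_blocked_turn_swap hconv hgen hd)

lemma not_blocked_turn_three (B : Blocked F S a b c) (hconv : ConvexPos S)
    (B₂ : Blocked F.turn.turn S a d₂ c₂) : ¬ Blocked F.turn.turn.turn S a d₃ c₃ := fun B₃ =>
  not_sees_three_alternate_cones hconv B.edge.1 B.edge.2.1 B₂.edge.2.1 B₃.survivor.1.1 B.sees
    B₂.sees B₃.turn_sees

lemma hasPathLE (B : Blocked F S a b c) (hconv : ConvexPos S) (hgen : GenPos S) :
    HasPathLE (TTAdj S) a b (4 * dist a b) := by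
  suffices HasPathLE (TTAdj S) a b (F.detour (1 + 1 + 1 + 1) a b) from
    this.mono (by norm_num [B.sees.detour_four_le])
  refine B.hasPathLE_of_turn hconv hgen (by norm_num) fun _ _ B₁ => ?_
  refine B₁.hasPathLE_of_turn hconv hgen (by norm_num) fun _ _ B₂ => ?_
  refine B₂.hasPathLE_of_turn hconv hgen le_rfl fun _ _ B₃ => ?_
  exact absurd B₃ (B.not_blocked_turn_three hconv B₂)

end Blocked

end HexFrame

/-- For points in convex and general position, every directed edge `a → b`
of `Θ₆(S)` is spanned in `ΘΘ₆(S)` by a path of length at most `4·|ab|`. -/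
theorem thetaTheta6_spans_theta_edges (S : Finset ℂ) (hconv : ConvexPos S)
    (hgen : GenPos S) (a b : ℂ) (hab : ThetaEdge S a b) :
    ∃ p : List ℂ, IsPath (TTAdj S) a b p ∧ pathLength p ≤ 4 * dist a b := by
  obtain ⟨F, hF⟩ := HexFrame.exists_sees (hgen.offRays hab.1 hab.2.1 hab.2.2.1)
  rcases HexFrame.thetaThetaEdge_or_blocked hgen hab hF with htt | ⟨c, hc⟩ | ⟨c, hc⟩
  · exact (HasPathLE.single (.inl htt)).mono (by linarith [dist_nonneg (x := a) (y := b)])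
  · exact hc.hasPathLE hconv hgen
  · exact hc.hasPathLE hconv hgen

end
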